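/- arXiv:2304.02932 — 2 statements merged into one kernel-verified Lean document; each statement's English description precedes it below -/
import Mathlib

section
/- Let X and Y be standard Borel spaces, let μ and ν be probability measures on X with μ absolutely continuous with respect to ν, and let κ and η be Markov kernels from X to Y such that κ(x) is absolutely continuous with respect to η(x) for every x ∈ X. Let α > 1 and ε₁, ε₂ ≥ 0 be reals such that D_α(μ‖ν) ≤ ε₁ and D_α(κ(x)‖η(x)) ≤ ε₂ for every x ∈ X. Then the composition-product measure μ ⊗ κ on X × Y is absolutely continuous with respect to ν ⊗ η and D_α(μ ⊗ κ ‖ ν ⊗ η) ≤ ε₁ + ε₂. (This is the measure-level form of the paper's lemma 'Adaptive Composition of RDP'.) -/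
open MeasureTheory ProbabilityTheory Real
open scoped ENNReal

/-- Rényi divergence of order `α`:
`D_α(μ‖ν) = (α−1)⁻¹ · log ∫ (dμ/dν)^α dν`. -/
noncomputable def renyiDiv {Ω : Type*} [MeasurableSpace Ω] (α : ℝ) (μ ν : Measure Ω) : ℝ :=
  (α - 1)⁻¹ * Real.log ((∫⁻ x, μ.rnDeriv ν x ^ α ∂ν).toReal)

/-!
Since the density of `μ ⊗ κ` with respect to `ν ⊗ η` is `(dμ/dν)(x) · (dκ(x)/dη(x))(y)`, the
Hellinger integral `∫ (dμ/dν)^α dν` satisfies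
`H_α(μ ⊗ κ, ν ⊗ η) = ∫ (dμ/dν)(x)^α · H_α(κ(x), η(x)) dν(x)`, and uniform bounds on the two factors
multiply. As `renyiDiv` is `0` when the Hellinger integral is infinite, a bound on `renyiDiv` is
informative only after finiteness is known. If the composed Hellinger integral is infinite, the
claim is trivial; if it is finite, then `H_α(κ(x), η(x))` is finite for `μ`-almost every `x`, and so
is `H_α(μ, ν)`, because `H_α(κ(x), η(x)) ≥ 1` by Jensen's inequality.
-/

/-- The Hellinger integral `∫ (dμ/dν)^α dν` of order `α`, the quantity under the logarithm in the
Rényi divergence. It is `ℝ≥0∞`-valued, so that it stays meaningful where `renyiDiv`, which takes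
`ENNReal.toReal`, assigns the value `0` to an infinite divergence. -/
noncomputable def hellingerIntegral {Ω : Type*} [MeasurableSpace Ω] (α : ℝ) (μ ν : Measure Ω) :
    ℝ≥0∞ :=
  ∫⁻ x, μ.rnDeriv ν x ^ α ∂ν

section Measure

variable {Ω : Type*} [MeasurableSpace Ω] {μ ν : Measure Ω} {α : ℝ}

lemma renyiDiv_eq_zero_of_hellingerIntegral_eq_top (h : hellingerIntegral α μ ν = ∞) :
    renyiDiv α μ ν = 0 := by
  rw [hellingerIntegral] at h
  simp [renyiDiv, h]

lemma renyiDiv_le_iff {ε : ℝ} (hα : 1 < α) (hε : 0 ≤ ε) (h : hellingerIntegral α μ ν ≠ ∞) :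
    renyiDiv α μ ν ≤ ε ↔
      hellingerIntegral α μ ν ≤ ENNReal.ofReal (Real.exp ((α - 1) * ε)) := by
  have hα' : 0 < α - 1 := sub_pos.2 hα
  rw [ENNReal.le_ofReal_iff_toReal_le h (Real.exp_pos _).le, renyiDiv, ← hellingerIntegral,
    inv_mul_le_iff₀ hα']
  rcases ENNReal.toReal_nonneg.eq_or_lt with h_zero | h_pos
  · rw [← h_zero, Real.log_zero]
    exact iff_of_true (mul_nonneg hα'.le hε) (Real.exp_pos _).le
  · exact Real.log_le_iff_le_exp h_pos

lemma rpow_lintegral_le_lintegral_rpow [IsProbabilityMeasure ν] {f : Ω → ℝ≥0∞}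
    (hf : AEMeasurable f ν) (hα : 1 ≤ α) : (∫⁻ x, f x ∂ν) ^ α ≤ ∫⁻ x, f x ^ α ∂ν := by
  have h := eLpNorm'_le_eLpNorm'_of_exponent_le one_pos hα ν hf.aestronglyMeasurable
  simp only [eLpNorm', enorm_eq_self, ENNReal.rpow_one, div_one] at h
  rwa [one_div, ENNReal.le_rpow_inv_iff (one_pos.trans_le hα)] at h

lemma one_le_hellingerIntegral [IsProbabilityMeasure μ] [IsProbabilityMeasure ν]
    (hμν : μ ≪ ν) (hα : 1 ≤ α) : 1 ≤ hellingerIntegral α μ ν := by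
  simpa only [hellingerIntegral, Measure.lintegral_rnDeriv hμν, measure_univ,
    ENNReal.one_rpow] using
    rpow_lintegral_le_lintegral_rpow (ν := ν) (μ.measurable_rnDeriv ν).aemeasurable hα

end Measure

section CompProd

variable {X Y : Type*} [MeasurableSpace X] [MeasurableSpace Y]

lemma withDensity_compProd_withDensity {ν : Measure X} [SFinite ν] {η : Kernel X Y}
    [IsSFiniteKernel η] {f : X → ℝ≥0∞} {g : X → Y → ℝ≥0∞} [IsSFiniteKernel (η.withDensity g)]
    (hf : Measurable f) (hg : Measurable (Function.uncurry g)) :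
    ν.withDensity f ⊗ₘ η.withDensity g =
      (ν ⊗ₘ η).withDensity fun p ↦ f p.1 * g p.1 p.2 := by
  have hfg : Measurable fun p : X × Y ↦ f p.1 * g p.1 p.2 := (hf.comp measurable_fst).mul hg
  ext s hs
  rw [Measure.compProd_apply hs, withDensity_apply _ hs, ← lintegral_indicator hs,
    Measure.lintegral_compProd (hfg.indicator hs),
    lintegral_withDensity_eq_lintegral_mul _ hf (Kernel.measurable_kernel_prodMk_left hs)]
  refine lintegral_congr fun x ↦ ?_
  have hsx : MeasurableSet (Prod.mk x ⁻¹' s) := measurable_prodMk_left hs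
  have hgx : Measurable (g x) := hg.of_uncurry_left
  rw [Pi.mul_apply, Kernel.withDensity_apply' _ hg, ← lintegral_indicator hsx,
    ← lintegral_const_mul _ (hgx.indicator hsx)]
  refine lintegral_congr fun y ↦ ?_
  by_cases hy : (x, y) ∈ s <;> simp [hy]

variable [MeasurableSpace.CountableOrCountablyGenerated X Y] {κ η : Kernel X Y} {α : ℝ}

lemma hellingerIntegral_kernel_eq_lintegral [IsFiniteKernel κ] [IsFiniteKernel η] (x : X) :
    hellingerIntegral α (κ x) (η x) = ∫⁻ y, κ.rnDeriv η x y ^ α ∂(η x) := by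
  refine lintegral_congr_ae ?_
  filter_upwards [κ.rnDeriv_eq_rnDeriv_measure (η := η) (a := x)] with y hy
  rw [hy]

lemma measurable_hellingerIntegral_kernel [IsFiniteKernel κ] [IsFiniteKernel η] :
    Measurable fun x ↦ hellingerIntegral α (κ x) (η x) := by
  simp_rw [hellingerIntegral_kernel_eq_lintegral]
  exact ((κ.measurable_rnDeriv η).pow_const α).lintegral_kernel_prod_right'

variable {μ ν : Measure X} [IsFiniteMeasure μ] [IsFiniteMeasure ν]

lemma rnDeriv_compProd_ae_eq_mul_kernel_rnDeriv [IsFiniteKernel κ] [IsFiniteKernel η]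
    (hμν : μ ≪ ν) (hκη : ∀ᵐ x ∂μ, κ x ≪ η x) :
    (μ ⊗ₘ κ).rnDeriv (ν ⊗ₘ η) =ᵐ[ν ⊗ₘ η]
      fun p ↦ μ.rnDeriv ν p.1 * κ.rnDeriv η p.1 p.2 := by
  have h_meas : Measurable fun p : X × Y ↦ κ.rnDeriv η p.1 p.2 := κ.measurable_rnDeriv η
  have h_kernel : κ =ᵐ[μ] η.withDensity (κ.rnDeriv η) := by
    filter_upwards [hκη] with x hx using (Kernel.withDensity_rnDeriv_eq hx).symm
  have h_density : μ ⊗ₘ κ =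
      (ν ⊗ₘ η).withDensity fun p ↦ μ.rnDeriv ν p.1 * κ.rnDeriv η p.1 p.2 := by
    rw [Measure.compProd_congr h_kernel,
      ← withDensity_compProd_withDensity (μ.measurable_rnDeriv ν) h_meas,
      Measure.withDensity_rnDeriv_eq μ ν hμν]
  rw [h_density]
  exact Measure.rnDeriv_withDensity _ (by fun_prop)

lemma hellingerIntegral_compProd [IsFiniteKernel κ] [IsFiniteKernel η]
    (hμν : μ ≪ ν) (hκη : ∀ᵐ x ∂μ, κ x ≪ η x) (hα : 0 ≤ α) :
    hellingerIntegral α (μ ⊗ₘ κ) (ν ⊗ₘ η) =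
      ∫⁻ x, μ.rnDeriv ν x ^ α * hellingerIntegral α (κ x) (η x) ∂ν := by
  have h_meas : Measurable fun p : X × Y ↦ (μ.rnDeriv ν p.1 * κ.rnDeriv η p.1 p.2) ^ α :=
    (((μ.measurable_rnDeriv ν).comp measurable_fst).mul (κ.measurable_rnDeriv η)).pow_const α
  calc hellingerIntegral α (μ ⊗ₘ κ) (ν ⊗ₘ η)
      = ∫⁻ p, (μ.rnDeriv ν p.1 * κ.rnDeriv η p.1 p.2) ^ α ∂(ν ⊗ₘ η) := by
        refine lintegral_congr_ae ?_
        filter_upwards [rnDeriv_compProd_ae_eq_mul_kernel_rnDeriv hμν hκη] with p hp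
        rw [hp]
    _ = ∫⁻ x, ∫⁻ y, μ.rnDeriv ν x ^ α * κ.rnDeriv η x y ^ α ∂(η x) ∂ν := by
        rw [Measure.lintegral_compProd h_meas]
        simp_rw [ENNReal.mul_rpow_of_nonneg _ _ hα]
    _ = ∫⁻ x, μ.rnDeriv ν x ^ α * hellingerIntegral α (κ x) (η x) ∂ν := by
        refine lintegral_congr fun x ↦ ?_
        rw [lintegral_const_mul _ ((κ.measurable_rnDeriv_right η x).pow_const α),
          hellingerIntegral_kernel_eq_lintegral]

lemma hellingerIntegral_compProd_le_mul [IsFiniteKernel κ] [IsFiniteKernel η]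
    (hμν : μ ≪ ν) (hκη : ∀ᵐ x ∂μ, κ x ≪ η x) (hα : 0 < α) {C : ℝ≥0∞}
    (hC : ∀ᵐ x ∂μ, hellingerIntegral α (κ x) (η x) ≤ C) :
    hellingerIntegral α (μ ⊗ₘ κ) (ν ⊗ₘ η) ≤ hellingerIntegral α μ ν * C := by
  rw [hellingerIntegral_compProd hμν hκη hα.le, hellingerIntegral,
    ← lintegral_mul_const _ ((μ.measurable_rnDeriv ν).pow_const α)]
  refine lintegral_mono_ae ?_
  filter_upwards [Measure.ae_rnDeriv_ne_zero_imp_of_ae ν hC] with x hx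
  by_cases h_zero : μ.rnDeriv ν x = 0
  · simp [h_zero, hα]
  · gcongr
    exact hx h_zero

lemma hellingerIntegral_le_hellingerIntegral_compProd [IsMarkovKernel κ] [IsMarkovKernel η]
    (hμν : μ ≪ ν) (hκη : ∀ᵐ x ∂μ, κ x ≪ η x) (hα : 1 ≤ α) :
    hellingerIntegral α μ ν ≤ hellingerIntegral α (μ ⊗ₘ κ) (ν ⊗ₘ η) := by
  have hα_pos : 0 < α := one_pos.trans_le hα
  rw [hellingerIntegral_compProd hμν hκη hα_pos.le]
  refine lintegral_mono_ae ?_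
  filter_upwards [Measure.ae_rnDeriv_ne_zero_imp_of_ae ν hκη] with x hx
  by_cases h_zero : μ.rnDeriv ν x = 0
  · simp [h_zero, hα_pos]
  · exact le_mul_of_one_le_right' (one_le_hellingerIntegral (hx h_zero) hα)

lemma ae_hellingerIntegral_ne_top_of_compProd [IsFiniteKernel κ] [IsFiniteKernel η]
    (hμν : μ ≪ ν) (hκη : ∀ᵐ x ∂μ, κ x ≪ η x) (hα : 0 ≤ α)
    (h : hellingerIntegral α (μ ⊗ₘ κ) (ν ⊗ₘ η) ≠ ∞) :
    ∀ᵐ x ∂μ, hellingerIntegral α (κ x) (η x) ≠ ∞ := by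
  rw [hellingerIntegral_compProd hμν hκη hα] at h
  have h_lt_top := ae_lt_top
    (((μ.measurable_rnDeriv ν).pow_const α).mul measurable_hellingerIntegral_kernel) h
  filter_upwards [hμν.ae_le h_lt_top, Measure.rnDeriv_pos hμν] with x hx h_pos h_top
  have h_rpow : μ.rnDeriv ν x ^ α ≠ 0 := (ENNReal.rpow_pos_of_nonneg h_pos hα).ne'
  simp [h_top, ENNReal.mul_top h_rpow] at hx

theorem rdp_adaptive_composition_general [IsMarkovKernel κ] [IsMarkovKernel η]
    (hμν : μ ≪ ν) (hκη : ∀ᵐ x ∂μ, κ x ≪ η x) {ε₁ ε₂ : ℝ} (hα : 1 < α)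
    (hε₁ : 0 ≤ ε₁) (hε₂ : 0 ≤ ε₂) (hD₁ : renyiDiv α μ ν ≤ ε₁)
    (hD₂ : ∀ᵐ x ∂μ, renyiDiv α (κ x) (η x) ≤ ε₂) :
    (μ ⊗ₘ κ) ≪ (ν ⊗ₘ η) ∧ renyiDiv α (μ ⊗ₘ κ) (ν ⊗ₘ η) ≤ ε₁ + ε₂ := by
  refine ⟨hμν.compProd hκη, ?_⟩
  have hε : 0 ≤ ε₁ + ε₂ := add_nonneg hε₁ hε₂
  have hα_pos : 0 < α := one_pos.trans hα
  by_cases h_top : hellingerIntegral α (μ ⊗ₘ κ) (ν ⊗ₘ η) = ∞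
  · rwa [renyiDiv_eq_zero_of_hellingerIntegral_eq_top h_top]
  have hμ : hellingerIntegral α μ ν ≤ ENNReal.ofReal (Real.exp ((α - 1) * ε₁)) :=
    (renyiDiv_le_iff hα hε₁ (ne_top_of_le_ne_top h_top
      (hellingerIntegral_le_hellingerIntegral_compProd hμν hκη hα.le))).1 hD₁
  have hκ : ∀ᵐ x ∂μ,
      hellingerIntegral α (κ x) (η x) ≤ ENNReal.ofReal (Real.exp ((α - 1) * ε₂)) := by
    filter_upwards [hD₂, ae_hellingerIntegral_ne_top_of_compProd hμν hκη hα_pos.le h_top]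
      with x hx hx_top using (renyiDiv_le_iff hα hε₂ hx_top).1 hx
  rw [renyiDiv_le_iff hα hε h_top, mul_add, Real.exp_add, ENNReal.ofReal_mul (Real.exp_pos _).le]
  exact (hellingerIntegral_compProd_le_mul hμν hκη hα_pos hκ).trans (mul_le_mul_left hμ _)

end CompProd

/-- Adaptive composition of RDP (measure-level form): if `D_α(μ‖ν) ≤ ε₁` and
`D_α(κ(x)‖η(x)) ≤ ε₂` for every `x`, then the composition-product measures satisfy
`μ ⊗ κ ≪ ν ⊗ η` and `D_α(μ ⊗ κ ‖ ν ⊗ η) ≤ ε₁ + ε₂`. -/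
theorem rdp_adaptive_composition {X Y : Type*}
    [MeasurableSpace X] [StandardBorelSpace X]
    [MeasurableSpace Y] [StandardBorelSpace Y]
    (μ ν : Measure X) [IsProbabilityMeasure μ] [IsProbabilityMeasure ν]
    (κ η : Kernel X Y) [IsMarkovKernel κ] [IsMarkovKernel η]
    (hac : μ ≪ ν) (hacK : ∀ x, κ x ≪ η x)
    (α ε₁ ε₂ : ℝ) (hα : 1 < α) (hε₁ : 0 ≤ ε₁) (hε₂ : 0 ≤ ε₂)
    (hD₁ : renyiDiv α μ ν ≤ ε₁) (hD₂ : ∀ x, renyiDiv α (κ x) (η x) ≤ ε₂) :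
    (μ ⊗ₘ κ) ≪ (ν ⊗ₘ η) ∧ renyiDiv α (μ ⊗ₘ κ) (ν ⊗ₘ η) ≤ ε₁ + ε₂ := by
  exact rdp_adaptive_composition_general hac (ae_of_all _ hacK) hα hε₁ hε₂ hD₁ (ae_of_all _ hD₂)
end

section
/- Let P and Q be probability measures on a standard Borel space that are mutually absolutely continuous, let q ∈ (0,1), let α ≥ 2 be an integer, and let ε : ℕ → ℝ and ε∞ ∈ ℝ. Assume: (i) for every integer j with 2 ≤ j ≤ α, D_j(P‖Q) ≤ ε(j); (ii) dP/dQ ≤ exp(ε∞) and dQ/dP ≤ exp(ε∞) hold Q-almost everywhere and P-almost everywhere respectively. Let M = (1−q)·Q + q·P. Then (α−1)·D_α(M ‖ Q) ≤ log( 1 + q²·C(α,2)·min{ 4·(e^{ε(2)} − 1), e^{ε(2)}·min{2, (e^{ε∞} − 1)²} } + ∑_{j=3}^{α} q^j·C(α,j)·e^{(j−1)·ε(j)}·min{2, (e^{ε∞} − 1)^j} ), where C(α,j) denotes the binomial coefficient. (This subsampling amplification inequality is the mathematical core of the paper's Theorem 1: the private selection mechanism, whose unsubsampled privacy curve is ε(α)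 = α/(8σ_r²) + α/(2σ_p²), when run on a subsample with sampling ratio q satisfies δ_t-approximate-(α, ε_s(α))-RDP with ε_s(α) equal to (α−1)⁻¹ times the right-hand side above.) -/
open MeasureTheory ProbabilityTheory Real
open scoped ENNReal

/-!
Write `f = dP/dQ`, a function of mean one under `Q`. The mixture has density `1 + q (f - 1)`, whose
`α`-th moment expands binomially into the moments of `f - 1`; the linear term vanishes.
The `j`-th moment of `f - 1` is at most `∫ f ^ j + 1 ≤ 2 ∫ f ^ j`, the last step by Jensen, and also
at most `(c - 1) ^ j ∫ f ^ j` when `c⁻¹ ≤ f ≤ c`, because then `|f - 1| ≤ f (c - 1)`. For `j = 2` it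
is the variance `∫ f ^ 2 - 1`, which gives the remaining alternative in the minimum.
-/

section OrderedAlgebra

lemma abs_sub_one_le_mul_sub_one {K : Type*} [Field K] [LinearOrder K] [IsStrictOrderedRing K]
    {r c : K} (hc : 0 < c) (hr : r ∈ Set.Icc c⁻¹ c) : |r - 1| ≤ r * (c - 1) := by
  have hrc : 1 ≤ r * c := (inv_le_iff_one_le_mul₀ hc).1 hr.1
  have hr_sq : r * r ≤ r * c :=
    mul_le_mul_of_nonneg_left hr.2 ((inv_nonneg.2 hc.le).trans hr.1)
  refine abs_le.2 ⟨by linarith, ?_⟩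
  linarith [sq_nonneg (r - 1), sub_sq r 1, sq r]

lemma abs_sub_one_pow_le_pow_add_one {R : Type*} [Ring R] [LinearOrder R] [IsOrderedRing R]
    {r : R} (hr : 0 ≤ r) (n : ℕ) : |r - 1| ^ n ≤ r ^ n + 1 := by
  rcases le_total 1 r with h | h
  · rw [abs_of_nonneg (sub_nonneg.2 h)]
    exact (pow_le_pow_left₀ (sub_nonneg.2 h) (sub_le_self r zero_le_one) n).trans
      (le_add_of_nonneg_right zero_le_one)
  · rw [abs_sub_comm, abs_of_nonneg (sub_nonneg.2 h)]
    exact (pow_le_one₀ (sub_nonneg.2 h) (sub_le_self 1 hr)).trans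
      (le_add_of_nonneg_left (pow_nonneg hr n))

end OrderedAlgebra

section Moments

variable {Ω : Type*} [MeasurableSpace Ω] {μ : Measure Ω} {f : Ω → ℝ} {c q : ℝ} {n : ℕ}

lemma integrable_pow_of_memLp [IsFiniteMeasure μ] (hf : MemLp f n μ) :
    Integrable (fun x => f x ^ n) μ := by
  refine (integrable_norm_iff (hf.aestronglyMeasurable.pow n)).1 ?_
  simpa only [Pi.pow_apply, norm_pow] using hf.integrable_norm_pow'

lemma integral_one_add_mul_pow (q : ℝ) (n : ℕ) (hf : ∀ j ≤ n, Integrable (fun x => f x ^ j) μ) :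
    ∫ x, (1 + q * f x) ^ n ∂μ
      = ∑ j ∈ Finset.range (n + 1), q ^ j * (n.choose j : ℝ) * ∫ x, f x ^ j ∂μ := by
  have hexpand (x : Ω) : (1 + q * f x) ^ n
      = ∑ j ∈ Finset.range (n + 1), q ^ j * (n.choose j : ℝ) * f x ^ j := by
    rw [add_comm, add_pow]
    refine Finset.sum_congr rfl fun j _ => ?_
    rw [one_pow, mul_pow]
    ring
  simp_rw [hexpand]
  rw [integral_finsetSum _ fun j hj => (hf j (Finset.mem_range_succ_iff.1 hj)).const_mul _]
  simp_rw [integral_const_mul]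

lemma integral_abs_sub_one_pow_le_mul_sub_one_pow (hc : 0 < c)
    (hfc : ∀ᵐ x ∂μ, f x ∈ Set.Icc c⁻¹ c) (hfn : Integrable (fun x => f x ^ n) μ) :
    ∫ x, |f x - 1| ^ n ∂μ ≤ (∫ x, f x ^ n ∂μ) * (c - 1) ^ n := by
  rw [← integral_mul_const]
  refine integral_mono_of_nonneg (.of_forall fun x => by positivity) (hfn.mul_const _) ?_
  filter_upwards [hfc] with x hx
  rw [← mul_pow]
  exact pow_le_pow_left₀ (abs_nonneg _) (abs_sub_one_le_mul_sub_one hc hx) n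

variable [IsProbabilityMeasure μ]

lemma pow_integral_le_integral_pow (h0 : 0 ≤ᵐ[μ] f) (hf : Integrable f μ)
    (hfn : Integrable (fun x => f x ^ n) μ) : (∫ x, f x ∂μ) ^ n ≤ ∫ x, f x ^ n ∂μ :=
  (convexOn_pow n).map_integral_le (continuous_pow n).continuousOn isClosed_Ici h0 hf hfn

lemma integral_one_add_mul_pow_of_integral_eq_zero (hn : 2 ≤ n) (h0 : ∫ x, f x ∂μ = 0) (q : ℝ)
    (hf : ∀ j ≤ n, Integrable (fun x => f x ^ j) μ) :
    ∫ x, (1 + q * f x) ^ n ∂μ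
      = 1 + q ^ 2 * (n.choose 2 : ℝ) * ∫ x, f x ^ 2 ∂μ
        + ∑ j ∈ Finset.Icc 3 n, q ^ j * (n.choose j : ℝ) * ∫ x, f x ^ j ∂μ := by
  have hsplit : Finset.Icc 3 n = Finset.Ico 3 (n + 1) := by ext; simp
  rw [integral_one_add_mul_pow q n hf, hsplit,
    ← Finset.sum_range_add_sum_Ico _ (by lia : 3 ≤ n + 1)]
  simp [Finset.sum_range_succ, h0]

lemma one_le_of_integral_eq_one_of_ae_le (h1 : ∫ x, f x ∂μ = 1) (hfc : ∀ᵐ x ∂μ, f x ≤ c) :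
    1 ≤ c :=
  h1 ▸ (convex_Iic c).integral_mem isClosed_Iic hfc (integrable_of_integral_eq_one h1)

lemma one_le_integral_pow (h0 : 0 ≤ᵐ[μ] f) (h1 : ∫ x, f x ∂μ = 1)
    (hfn : Integrable (fun x => f x ^ n) μ) : 1 ≤ ∫ x, f x ^ n ∂μ := by
  simpa only [h1, one_pow] using
    pow_integral_le_integral_pow h0 (integrable_of_integral_eq_one h1) hfn

lemma integral_sub_one_eq_zero (h1 : ∫ x, f x ∂μ = 1) : ∫ x, (f x - 1) ∂μ = 0 := by
  rw [integral_sub (integrable_of_integral_eq_one h1) (integrable_const 1), h1]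
  simp

lemma one_le_integral_one_add_mul_sub_one_pow (hq : q ∈ Set.Icc (0 : ℝ) 1) (h0 : 0 ≤ᵐ[μ] f)
    (h1 : ∫ x, f x ∂μ = 1) (hfn : MemLp f n μ) :
    1 ≤ ∫ x, (1 + q * (f x - 1)) ^ n ∂μ := by
  have hint : Integrable (fun x => q * (f x - 1)) μ :=
    ((integrable_of_integral_eq_one h1).sub (integrable_const 1)).const_mul q
  have hnonneg : 0 ≤ᵐ[μ] fun x => 1 + q * (f x - 1) := by
    filter_upwards [h0] with x hx
    have hqx : 0 ≤ q * f x := mul_nonneg hq.1 hx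
    simp only [Pi.zero_apply]
    linarith [hq.2]
  have hmean : ∫ x, (1 + q * (f x - 1)) ∂μ = 1 := by
    rw [integral_add (integrable_const 1) hint, integral_const_mul, integral_sub_one_eq_zero h1]
    simp
  have hsub : MemLp (fun x => f x - 1) n μ := hfn.sub (memLp_const (1 : ℝ))
  have hLp : MemLp (fun x => 1 + q * (f x - 1)) n μ :=
    (memLp_const (1 : ℝ)).add (hsub.const_mul q)
  exact one_le_integral_pow hnonneg hmean (integrable_pow_of_memLp hLp)

lemma integral_sub_one_sq (hf : MemLp f 2 μ) (h1 : ∫ x, f x ∂μ = 1) :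
    ∫ x, (f x - 1) ^ 2 ∂μ = ∫ x, f x ^ 2 ∂μ - 1 := by
  have hvar := variance_eq_sub hf
  rw [variance_eq_integral hf.aemeasurable, h1] at hvar
  simpa using hvar

lemma integral_abs_sub_one_pow_le_mul_two (h0 : 0 ≤ᵐ[μ] f) (h1 : ∫ x, f x ∂μ = 1)
    (hfn : Integrable (fun x => f x ^ n) μ) :
    ∫ x, |f x - 1| ^ n ∂μ ≤ (∫ x, f x ^ n ∂μ) * 2 :=
  calc ∫ x, |f x - 1| ^ n ∂μ ≤ ∫ x, (f x ^ n + 1) ∂μ := by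
        refine integral_mono_of_nonneg (.of_forall fun x => by positivity)
          (hfn.add (integrable_const 1)) ?_
        filter_upwards [h0] with x hx
        exact abs_sub_one_pow_le_pow_add_one hx n
    _ = (∫ x, f x ^ n ∂μ) + 1 := by
        rw [integral_add hfn (integrable_const 1)]
        simp
    _ ≤ (∫ x, f x ^ n ∂μ) * 2 := by linarith [one_le_integral_pow h0 h1 hfn]

lemma integral_sub_one_pow_le (hfc : ∀ᵐ x ∂μ, f x ∈ Set.Icc c⁻¹ c) (h1 : ∫ x, f x ∂μ = 1)
    (hfn : Integrable (fun x => f x ^ n) μ) :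
    ∫ x, (f x - 1) ^ n ∂μ ≤ (∫ x, f x ^ n ∂μ) * min 2 ((c - 1) ^ n) := by
  have hc : 0 < c := zero_lt_one.trans_le
    (one_le_of_integral_eq_one_of_ae_le h1 (hfc.mono fun _ hx => hx.2))
  have h0 : 0 ≤ᵐ[μ] f := hfc.mono fun x hx => (inv_nonneg.2 hc.le).trans hx.1
  rw [mul_min_of_nonneg _ _ (zero_le_one.trans (one_le_integral_pow h0 h1 hfn))]
  calc ∫ x, (f x - 1) ^ n ∂μ ≤ ∫ x, |f x - 1| ^ n ∂μ := by
        simpa only [abs_pow] using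
          (le_abs_self _).trans (abs_integral_le_integral_abs (f := fun x => (f x - 1) ^ n))
    _ ≤ _ := le_min (integral_abs_sub_one_pow_le_mul_two h0 h1 hfn)
        (integral_abs_sub_one_pow_le_mul_sub_one_pow hc hfc hfn)

theorem integral_one_add_mul_sub_one_pow_le (hf : AEStronglyMeasurable f μ)
    (hfc : ∀ᵐ x ∂μ, f x ∈ Set.Icc c⁻¹ c) (h1 : ∫ x, f x ∂μ = 1) (hq : 0 ≤ q) (hn : 2 ≤ n)
    {m : ℕ → ℝ} (hm : ∀ j, 2 ≤ j → j ≤ n → ∫ x, f x ^ j ∂μ ≤ m j) :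
    ∫ x, (1 + q * (f x - 1)) ^ n ∂μ
      ≤ 1 + q ^ 2 * (n.choose 2 : ℝ) * min (4 * (m 2 - 1)) (m 2 * min 2 ((c - 1) ^ 2))
        + ∑ j ∈ Finset.Icc 3 n, q ^ j * (n.choose j : ℝ) * m j * min 2 ((c - 1) ^ j) := by
  have hLp (p : ℝ≥0∞) : MemLp f p μ := memLp_of_bounded hfc hf p
  have hpow (j : ℕ) : Integrable (fun x => f x ^ j) μ := integrable_pow_of_memLp (hLp j)
  have hc : 1 ≤ c := one_le_of_integral_eq_one_of_ae_le h1 (hfc.mono fun _ hx => hx.2)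
  have h0 : 0 ≤ᵐ[μ] f :=
    hfc.mono fun x hx => (inv_nonneg.2 (zero_le_one.trans hc)).trans hx.1
  have hmoment (j : ℕ) (hj : 2 ≤ j) (hjn : j ≤ n) :
      ∫ x, (f x - 1) ^ j ∂μ ≤ m j * min 2 ((c - 1) ^ j) :=
    (integral_sub_one_pow_le hfc h1 (hpow j)).trans <|
      mul_le_mul_of_nonneg_right (hm j hj hjn) <|
        le_min zero_le_two (pow_nonneg (sub_nonneg.2 hc) j)
  have hsecond : ∫ x, (f x - 1) ^ 2 ∂μ ≤ 4 * (m 2 - 1) := by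
    rw [integral_sub_one_sq (hLp 2) h1]
    linarith [hm 2 le_rfl hn, one_le_integral_pow h0 h1 (hpow 2)]
  rw [integral_one_add_mul_pow_of_integral_eq_zero hn (integral_sub_one_eq_zero h1) q
    fun j _ => integrable_pow_of_memLp ((hLp j).sub (memLp_const 1))]
  gcongr 1 + _ * ?_ + ∑ j ∈ _, ?_ with j hj
  · exact le_min hsecond (hmoment 2 le_rfl hn)
  · rw [Finset.mem_Icc] at hj
    rw [mul_assoc _ (m j)]
    gcongr
    exact hmoment j (by lia) hj.2

end Moments

section RenyiDivergence

variable {Ω : Type*} [MeasurableSpace Ω]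

lemma renyiDiv_natCast (n : ℕ) (μ ν : Measure Ω) [SigmaFinite μ] :
    renyiDiv (n : ℝ) μ ν
      = ((n : ℝ) - 1)⁻¹ * Real.log (∫ x, (μ.rnDeriv ν x).toReal ^ n ∂ν) := by
  have hfinite : ∀ᵐ x ∂ν, μ.rnDeriv ν x ^ n < ∞ :=
    (μ.rnDeriv_lt_top ν).mono fun _ hx => ENNReal.pow_lt_top hx
  simp only [renyiDiv, ENNReal.rpow_natCast, ← ENNReal.toReal_pow,
    integral_toReal ((μ.measurable_rnDeriv ν).pow_const n).aemeasurable hfinite]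

lemma renyiDiv_natCast_le_iff {μ ν : Measure Ω} [IsProbabilityMeasure μ] [IsProbabilityMeasure ν]
    (hμν : μ ≪ ν) {n : ℕ} (hn : 1 < n)
    (hint : Integrable (fun x => (μ.rnDeriv ν x).toReal ^ n) ν) {ε : ℝ} :
    renyiDiv (n : ℝ) μ ν ≤ ε
      ↔ ∫ x, (μ.rnDeriv ν x).toReal ^ n ∂ν ≤ Real.exp (((n : ℝ) - 1) * ε) := by
  have hn' : (0 : ℝ) < (n : ℝ) - 1 := sub_pos.2 (mod_cast hn)
  have hone : 1 ≤ ∫ x, (μ.rnDeriv ν x).toReal ^ n ∂ν :=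
    one_le_integral_pow (.of_forall fun _ => ENNReal.toReal_nonneg)
      (by rw [Measure.integral_toReal_rnDeriv hμν, probReal_univ]) hint
  rw [renyiDiv_natCast, inv_mul_le_iff₀ hn', Real.log_le_iff_le_exp (zero_lt_one.trans_le hone)]

lemma toReal_rnDeriv_mem_Icc {μ ν : Measure Ω} [SigmaFinite μ] [SigmaFinite ν] (hνμ : ν ≪ μ)
    {c : ℝ} (hμ : ∀ᵐ x ∂ν, (μ.rnDeriv ν x).toReal ≤ c)
    (hν : ∀ᵐ x ∂μ, (ν.rnDeriv μ x).toReal ≤ c) :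
    ∀ᵐ x ∂ν, (μ.rnDeriv ν x).toReal ∈ Set.Icc c⁻¹ c := by
  filter_upwards [Measure.inv_rnDeriv' hνμ, Measure.rnDeriv_pos' hνμ, μ.rnDeriv_lt_top ν, hμ,
    hνμ.ae_le hν] with x hinv hpos hfinite hxμ hxν
  rw [← hinv, Pi.inv_apply, ENNReal.toReal_inv] at hxν
  exact ⟨inv_le_of_inv_le₀ (ENNReal.toReal_pos hpos.ne' hfinite.ne) hxν, hxμ⟩

lemma toReal_rnDeriv_mixture (μ ν : Measure Ω) [IsFiniteMeasure μ] [IsFiniteMeasure ν] {q : ℝ}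
    (hq : q ∈ Set.Icc (0 : ℝ) 1) :
    ∀ᵐ x ∂ν, ((ENNReal.ofReal (1 - q) • ν + ENNReal.ofReal q • μ).rnDeriv ν x).toReal
      = 1 + q * ((μ.rnDeriv ν x).toReal - 1) := by
  have := ν.smul_finite (ENNReal.ofReal_ne_top (r := 1 - q))
  have := μ.smul_finite (ENNReal.ofReal_ne_top (r := q))
  filter_upwards [Measure.rnDeriv_add (ENNReal.ofReal (1 - q) • ν) (ENNReal.ofReal q • μ) ν,
    Measure.rnDeriv_smul_left_of_ne_top ν ν (ENNReal.ofReal_ne_top (r := 1 - q)),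
    Measure.rnDeriv_smul_left_of_ne_top μ ν (ENNReal.ofReal_ne_top (r := q)),
    ν.rnDeriv_self, μ.rnDeriv_lt_top ν] with x hadd hsmulν hsmulμ hself hfinite
  rw [hadd, Pi.add_apply, hsmulν, hsmulμ, Pi.smul_apply, Pi.smul_apply, hself, smul_eq_mul,
    smul_eq_mul, mul_one, ENNReal.toReal_add ENNReal.ofReal_ne_top
      (ENNReal.mul_ne_top ENNReal.ofReal_ne_top hfinite.ne),
    ENNReal.toReal_mul, ENNReal.toReal_ofReal (sub_nonneg.2 hq.2), ENNReal.toReal_ofReal hq.1]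
  ring

lemma sub_one_mul_renyiDiv_mixture (μ ν : Measure Ω) [IsFiniteMeasure μ] [IsFiniteMeasure ν]
    {q : ℝ} (hq : q ∈ Set.Icc (0 : ℝ) 1) {n : ℕ} (hn : n ≠ 1) :
    ((n : ℝ) - 1) * renyiDiv (n : ℝ) (ENNReal.ofReal (1 - q) • ν + ENNReal.ofReal q • μ) ν
      = Real.log (∫ x, (1 + q * ((μ.rnDeriv ν x).toReal - 1)) ^ n ∂ν) := by
  have := ν.smul_finite (ENNReal.ofReal_ne_top (r := 1 - q))
  have := μ.smul_finite (ENNReal.ofReal_ne_top (r := q))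
  have hn' : (n : ℝ) - 1 ≠ 0 := sub_ne_zero.2 (mod_cast hn)
  rw [renyiDiv_natCast, mul_inv_cancel_left₀ hn']
  congr 1
  refine integral_congr_ae ?_
  filter_upwards [toReal_rnDeriv_mixture μ ν hq] with x hx
  rw [hx]

end RenyiDivergence

theorem subsampling_amplification_general {Ω : Type*} [MeasurableSpace Ω]
    (P Q : Measure Ω) [IsProbabilityMeasure P] [IsProbabilityMeasure Q]
    (hPQ : P ≪ Q) (hQP : Q ≪ P)
    (q : ℝ) (hq : q ∈ Set.Icc (0 : ℝ) 1)
    (α : ℕ) (hα : 2 ≤ α) (ε : ℕ → ℝ) (εinf : ℝ)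
    (hε : ∀ j : ℕ, 2 ≤ j → j ≤ α → renyiDiv (j : ℝ) P Q ≤ ε j)
    (hPQinf : ∀ᵐ x ∂Q, (P.rnDeriv Q x).toReal ≤ Real.exp εinf)
    (hQPinf : ∀ᵐ x ∂P, (Q.rnDeriv P x).toReal ≤ Real.exp εinf) :
    ((α : ℝ) - 1) *
        renyiDiv (α : ℝ) (ENNReal.ofReal (1 - q) • Q + ENNReal.ofReal q • P) Q
      ≤ Real.log (1
          + q ^ 2 * (α.choose 2 : ℝ) *
            min (4 * (Real.exp (ε 2) - 1))
              (Real.exp (ε 2) * min 2 ((Real.exp εinf - 1) ^ 2))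
          + ∑ j ∈ Finset.Icc 3 α, q ^ j * (α.choose j : ℝ) *
              Real.exp (((j : ℝ) - 1) * ε j) * min 2 ((Real.exp εinf - 1) ^ j)) := by
  have hmeas : AEStronglyMeasurable (fun x => (P.rnDeriv Q x).toReal) Q :=
    (P.measurable_rnDeriv Q).ennreal_toReal.aestronglyMeasurable
  have hbound := toReal_rnDeriv_mem_Icc hQP hPQinf hQPinf
  have hLp (j : ℕ) : MemLp (fun x => (P.rnDeriv Q x).toReal) j Q := memLp_of_bounded hbound hmeas j
  have hmean : ∫ x, (P.rnDeriv Q x).toReal ∂Q = 1 := by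
    rw [Measure.integral_toReal_rnDeriv hPQ, probReal_univ]
  have hmoment (j : ℕ) (hj : 2 ≤ j) (hjα : j ≤ α) :
      ∫ x, (P.rnDeriv Q x).toReal ^ j ∂Q ≤ Real.exp (((j : ℝ) - 1) * ε j) :=
    (renyiDiv_natCast_le_iff hPQ hj (integrable_pow_of_memLp (hLp j))).1 (hε j hj hjα)
  have hexp_two : Real.exp ((((2 : ℕ) : ℝ) - 1) * ε 2) = Real.exp (ε 2) := by norm_num
  have hone := one_le_integral_one_add_mul_sub_one_pow hq
    (.of_forall fun _ => ENNReal.toReal_nonneg) hmean (hLp α)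
  rw [sub_one_mul_renyiDiv_mixture P Q hq (by lia), ← hexp_two]
  exact Real.log_le_log (zero_lt_one.trans_le hone) <|
    integral_one_add_mul_sub_one_pow_le hmeas hbound hmean hq.1 hα hmoment

/-- Subsampling amplification inequality (core of the paper's Theorem 1): for mutually
absolutely continuous `P, Q`, with `D_j(P‖Q) ≤ ε(j)` for `2 ≤ j ≤ α` and likelihood ratios
bounded by `exp(ε∞)`, the mixture `M = (1−q)Q + qP` satisfies
`(α−1)·D_α(M‖Q) ≤ log(1 + q²·C(α,2)·min{4(e^{ε(2)}−1), e^{ε(2)}·min{2,(e^{ε∞}−1)²}}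
  + ∑_{j=3}^{α} qʲ·C(α,j)·e^{(j−1)ε(j)}·min{2,(e^{ε∞}−1)ʲ})`. -/
theorem subsampling_amplification {Ω : Type*} [MeasurableSpace Ω] [StandardBorelSpace Ω]
    (P Q : Measure Ω) [IsProbabilityMeasure P] [IsProbabilityMeasure Q]
    (hPQ : P ≪ Q) (hQP : Q ≪ P)
    (q : ℝ) (hq : q ∈ Set.Ioo (0 : ℝ) 1)
    (α : ℕ) (hα : 2 ≤ α) (ε : ℕ → ℝ) (εinf : ℝ)
    (hε : ∀ j : ℕ, 2 ≤ j → j ≤ α → renyiDiv (j : ℝ) P Q ≤ ε j)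
    (hPQinf : ∀ᵐ x ∂Q, (P.rnDeriv Q x).toReal ≤ Real.exp εinf)
    (hQPinf : ∀ᵐ x ∂P, (Q.rnDeriv P x).toReal ≤ Real.exp εinf) :
    ((α : ℝ) - 1) *
        renyiDiv (α : ℝ) (ENNReal.ofReal (1 - q) • Q + ENNReal.ofReal q • P) Q
      ≤ Real.log (1
          + q ^ 2 * (α.choose 2 : ℝ) *
            min (4 * (Real.exp (ε 2) - 1))
              (Real.exp (ε 2) * min 2 ((Real.exp εinf - 1) ^ 2))
          + ∑ j ∈ Finset.Icc 3 α, q ^ j * (α.choose j : ℝ) *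
              Real.exp (((j : ℝ) - 1) * ε j) * min 2 ((Real.exp εinf - 1) ^ j)) := by
  exact subsampling_amplification_general P Q hPQ hQP q (Set.Ioo_subset_Icc_self hq) α hα ε εinf hε
    hPQinf hQPinf
end
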